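/- Let x ∈ L²(Ω, ℝᵐ) and let v_1, …, v_p ∈ L²(Ω, ℝⁿ) be pairwise uncorrelated random vectors, i.e. 𝔼_{v_i v_j} = 0 for i ≠ j. Fix rank bounds η_1, …, η_p. For each k let β_{k1} ≥ β_{k2} ≥ ⋯ ≥ β_{kn} ≥ 0 be the singular values of 𝔼_{x v_k}(𝔼_{v_k v_k}^{1/2})^†. Then: (a) for every f ∈ ℝᵐ and all F_1, …, F_p ∈ ℝ^{m×n} with rank F_k ≤ η_k for each k, E[‖x − f − Σ_{k=1}^p F_k v_k‖²] ≥ tr(𝔼_{xx}) − Σ_{k=1}^p Σ_{j=1}^{η_k} β_{kj}²; and (b) this bound is attained by F_k⁰ = G_{kη_k}(𝔼_{v_k v_k}^{1/2})^† and f⁰ = E[x] − Σ_{k=1}^p F_k⁰ E[v_k], where G_{kη_k} is the truncated singular value decomposition of 𝔼_{x v_k}(𝔼_{v_k v_k}^{1/2})^† retaining the η_k largest singular values. -/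

import Mathlib

/-!
Split the error into squared bias and variance. The bias vanishes exactly for the optimal choice
of `f`, and since the `v k` are pairwise uncorrelated the variance is
`tr 𝔼_{xx} - ∑ k, (2 tr(F k 𝔼_{x v_k}ᵀ) - tr(F k 𝔼_{v_k v_k} (F k)ᵀ))` (`errJ_eq`).

Write `S` for the square root of `𝔼_{v_k v_k}`, `Q` for its pseudoinverse and `B = 𝔼_{x v_k} Q`.
A combination of the coordinates of `v k` with zero variance is almost surely constant, so
the kernel of `S` is contained in that of `𝔼_{x v_k}` (`cov_mul_eq_zero`); hence
`𝔼_{x v_k} = B S`. With `M = F k S` the `k`-th term becomes `2 tr(M Bᵀ) - tr(M Mᵀ)`, that is,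
`‖B‖² - ‖M - B‖²` in the Frobenius norm, and `rank M ≤ rank (F k) ≤ η k`. The Eckart–Young bound
(`eckart_young`) says that this is at most the sum of the `η k` largest `β k j ^ 2`.

For the attainment, `S` and `Q` commute, so `B Q S = B S Q = B`, and the same identity holds for
the truncation `G k` of `B`. Thus `F0 k` corresponds to `M = G k Q S = G k`, for which the
`k`-th term equals the sum of the retained squared singular values.
-/

open MeasureTheory Matrix BigOperators

noncomputable def vmean {Ω : Type*} [MeasurableSpace Ω] {n : ℕ} (μ : Measure Ω)
    (g : Ω → Fin n → ℝ) : Fin n → ℝ :=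
  fun i => ∫ ω, g ω i ∂μ

/-- Cross-covariance matrix `𝔼_{gh} = E[g hᵀ] - E[g] E[h]ᵀ`. -/
noncomputable def cov {Ω : Type*} [MeasurableSpace Ω] {m n : ℕ} (μ : Measure Ω)
    (g : Ω → Fin m → ℝ) (h : Ω → Fin n → ℝ) : Matrix (Fin m) (Fin n) ℝ :=
  Matrix.of fun i j => (∫ ω, g ω i * h ω j ∂μ) - (∫ ω, g ω i ∂μ) * (∫ ω, h ω j ∂μ)

/-- `g ∈ L²(Ω, ℝⁿ)`: measurable with `E[‖g‖²] < ∞`. -/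
def MemL2 {Ω : Type*} [MeasurableSpace Ω] {n : ℕ} (μ : Measure Ω)
    (g : Ω → Fin n → ℝ) : Prop :=
  Measurable g ∧ Integrable (fun ω => ∑ i, (g ω i) ^ 2) μ

/-- `P` is the Moore–Penrose pseudoinverse of `M`. -/
def IsMP {m n : ℕ} (M : Matrix (Fin m) (Fin n) ℝ) (P : Matrix (Fin n) (Fin m) ℝ) : Prop :=
  M * P * M = M ∧ P * M * P = P ∧ (M * P)ᵀ = M * P ∧ (P * M)ᵀ = P * M

/-- The error functional `J(f, F₁, …, F_p) = E[‖x - f - Σ_k F_k v_k‖²]`. -/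
noncomputable def errJ {Ω : Type*} [MeasurableSpace Ω] {m n p : ℕ} (μ : Measure Ω)
    (x : Ω → Fin m → ℝ) (v : Fin p → Ω → Fin n → ℝ) (f : Fin m → ℝ)
    (F : Fin p → Matrix (Fin m) (Fin n) ℝ) : ℝ :=
  ∫ ω, ∑ i, (x ω i - f i - ∑ k, (F k).mulVec (v k ω) i) ^ 2 ∂μ

/-! ### Linear algebra -/

/-- Bessel's inequality in matrix form: the rows of `T` are orthonormal. -/
lemma bessel_of_mul_transpose_eq_one {k l : ℕ} {T : Matrix (Fin k) (Fin l) ℝ} (hT : T * Tᵀ = 1)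
    (u : Fin l → ℝ) : T *ᵥ u ⬝ᵥ T *ᵥ u ≤ u ⬝ᵥ u := by
  have h : 0 ≤ (u - Tᵀ *ᵥ (T *ᵥ u)) ⬝ᵥ (u - Tᵀ *ᵥ (T *ᵥ u)) := by
    simpa using dotProduct_star_self_nonneg (u - Tᵀ *ᵥ (T *ᵥ u))
  have h1 : u ⬝ᵥ (Tᵀ *ᵥ (T *ᵥ u)) = T *ᵥ u ⬝ᵥ T *ᵥ u := by
    rw [dotProduct_mulVec, vecMul_transpose]
  have h2 : (Tᵀ *ᵥ (T *ᵥ u)) ⬝ᵥ (Tᵀ *ᵥ (T *ᵥ u)) = T *ᵥ u ⬝ᵥ T *ᵥ u := by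
    rw [dotProduct_mulVec, vecMul_transpose, mulVec_mulVec (T *ᵥ u), hT, one_mulVec]
  rw [sub_dotProduct, dotProduct_sub, dotProduct_sub, dotProduct_comm (Tᵀ *ᵥ (T *ᵥ u)) u,
    h1, h2] at h
  linarith

/-- The columns of `U` are an orthonormal basis of the column space of `M`. -/
lemma exists_orthonormal_factor {m n : ℕ} (M : Matrix (Fin m) (Fin n) ℝ) :
    ∃ (r : ℕ) (U : Matrix (Fin m) (Fin r) ℝ) (C : Matrix (Fin r) (Fin n) ℝ),
      r = M.rank ∧ Uᵀ * U = 1 ∧ U * C = M := by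
  classical
  let W : Submodule ℝ (EuclideanSpace ℝ (Fin m)) :=
    (LinearMap.range M.mulVecLin).map (WithLp.linearEquiv 2 ℝ (Fin m → ℝ)).symm.toLinearMap
  have hW : Module.finrank ℝ W = M.rank := LinearEquiv.finrank_map_eq _ _
  let b : OrthonormalBasis (Fin M.rank) ℝ W :=
    (stdOrthonormalBasis ℝ W).reindex (finCongr hW)
  let U : Matrix (Fin m) (Fin M.rank) ℝ := Matrix.of fun i a => (b a : EuclideanSpace ℝ (Fin m)) i
  refine ⟨M.rank, U, Uᵀ * M, rfl, ?_, ?_⟩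
  · ext a a'
    have := orthonormal_iff_ite.mp b.orthonormal a' a
    rw [Submodule.coe_inner, PiLp.inner_apply] at this
    simp only [mul_apply, transpose_apply, one_apply, U, of_apply]
    simpa [eq_comm] using this
  · ext i j
    let w : W := ⟨WithLp.toLp 2 (M *ᵥ Pi.single j 1),
      ⟨M *ᵥ Pi.single j 1, ⟨Pi.single j 1, rfl⟩, rfl⟩⟩
    have hw := congrArg (fun y : W => (y : EuclideanSpace ℝ (Fin m)) i) (b.sum_repr w)
    have hr : ∀ a, b.repr w a = (Uᵀ * M) a j := by
      intro a
      rw [b.repr_apply_apply, Submodule.coe_inner, PiLp.inner_apply]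
      simp [w, U, mul_apply, mul_comm]
    have hwi : (w : EuclideanSpace ℝ (Fin m)) i = M i j := by simp [w]
    rw [mul_apply]
    simp only [hr, hwi, Submodule.coe_sum, Submodule.coe_smul, WithLp.ofLp_sum, WithLp.ofLp_smul,
      Finset.sum_apply, Pi.smul_apply, smul_eq_mul] at hw
    rw [← hw]
    exact Finset.sum_congr rfl fun a _ => mul_comm _ _

/-- A linear functional with decreasing coefficients `β j ^ 2`, on weights in `[0, 1]` of total
mass at most `r`, is largest when the first `r` weights equal `1`. -/
lemma sum_weight_le {n r : ℕ} {β t : Fin n → ℝ} (hmono : Antitone β) (hpos : ∀ j, 0 ≤ β j)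
    (ht0 : ∀ j, 0 ≤ t j) (ht1 : ∀ j, t j ≤ 1) (hsum : ∑ j, t j ≤ r) :
    ∑ j, β j ^ 2 * t j ≤ ∑ j ∈ Finset.univ.filter (fun j : Fin n => (j : ℕ) < r), β j ^ 2 := by
  rw [Finset.sum_filter]
  by_cases hr : r < n
  · -- compare every coefficient with the threshold value `c`
    set c := β ⟨r, hr⟩ ^ 2 with hc
    have hcard : ∑ j : Fin n, (if (j : ℕ) < r then (1 : ℝ) else 0) = r := by
      rw [Fin.sum_univ_eq_sum_range (fun i => if i < r then (1 : ℝ) else 0) n,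
        ← Finset.sum_filter]
      have : (Finset.range n).filter (fun i => i < r) = Finset.range r := by
        ext i; simp; omega
      simp [this]
    have hterm : ∀ j : Fin n, β j ^ 2 * t j - (if (j : ℕ) < r then β j ^ 2 else 0)
        ≤ c * t j - c * (if (j : ℕ) < r then (1 : ℝ) else 0) := by
      intro j
      split_ifs with h
      · have : c ≤ β j ^ 2 :=
          pow_le_pow_left₀ (hpos _) (hmono (show j ≤ ⟨r, hr⟩ from h.le)) 2
        nlinarith [ht1 j]
      · have : β j ^ 2 ≤ c :=
          pow_le_pow_left₀ (hpos _) (hmono (show (⟨r, hr⟩ : Fin n) ≤ j from not_lt.mp h)) 2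
        nlinarith [ht0 j]
    have := Finset.sum_le_sum fun j (_ : j ∈ Finset.univ) => hterm j
    rw [Finset.sum_sub_distrib, Finset.sum_sub_distrib, ← Finset.mul_sum, ← Finset.mul_sum,
      hcard] at this
    nlinarith [sq_nonneg (β ⟨r, hr⟩)]
  · refine Finset.sum_le_sum fun j _ => ?_
    rw [if_pos (by omega)]
    nlinarith [ht1 j, sq_nonneg (β j)]

lemma trace_mul_transpose_self_nonneg {k l : ℕ} (M : Matrix (Fin k) (Fin l) ℝ) :
    0 ≤ trace (M * Mᵀ) := by
  simpa using (posSemidef_self_mul_conjTranspose M).trace_nonneg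

/-- The Eckart–Young bound in the Frobenius norm. With `B = Tᵀ diag(β) D` a singular value
decomposition, `‖M - B‖² - ‖B‖² ≥ -∑_{j < r} β_j²` whenever `rank M ≤ r`.

Let `P` be the orthogonal projection onto the column space of `M`. Completing the square bounds the
left-hand side from above by `‖P B‖² = ∑_j β_j² t_j`, where `t_j` is the squared length of the projected
`j`-th left singular vector; these weights lie in `[0, 1]` and sum to at most `rank M`. -/
lemma eckart_young {m n r : ℕ} {T : Matrix (Fin n) (Fin m) ℝ} {D : Matrix (Fin n) (Fin n) ℝ}
    {β : Fin n → ℝ} (hT : T * Tᵀ = 1) (hD : D * Dᵀ = 1) (hmono : Antitone β)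
    (hpos : ∀ j, 0 ≤ β j) {B : Matrix (Fin m) (Fin n) ℝ} (hB : B = Tᵀ * diagonal β * D)
    (M : Matrix (Fin m) (Fin n) ℝ) (hM : M.rank ≤ r) :
    2 * trace (M * Bᵀ) - trace (M * Mᵀ) ≤
      ∑ j ∈ Finset.univ.filter (fun j : Fin n => (j : ℕ) < r), β j ^ 2 := by
  obtain ⟨q, U, C, hq, hU, hUM⟩ := exists_orthonormal_factor M
  -- completing the square in `C`
  have hsq := trace_mul_transpose_self_nonneg (C - Uᵀ * B)
  have e1 : trace (M * Mᵀ) = trace (C * Cᵀ) := by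
    rw [← hUM, transpose_mul, Matrix.mul_assoc, trace_mul_comm, Matrix.mul_assoc, Matrix.mul_assoc,
      hU, Matrix.mul_one]
  have e2 : trace (M * Bᵀ) = trace (C * (Uᵀ * B)ᵀ) := by
    rw [transpose_mul, transpose_transpose, ← Matrix.mul_assoc, trace_mul_comm (C * Bᵀ),
      ← Matrix.mul_assoc, hUM]
  have e3 : trace ((Uᵀ * B) * Cᵀ) = trace (C * (Uᵀ * B)ᵀ) := by
    rw [← trace_transpose, transpose_mul, transpose_transpose]
  have e4 : trace ((Uᵀ * B) * (Uᵀ * B)ᵀ) = ∑ j, β j ^ 2 * ∑ a, (T * U) j a ^ 2 := by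
    have : (Uᵀ * B) * (Uᵀ * B)ᵀ = (T * U)ᵀ * (diagonal (fun j => β j ^ 2) * (T * U)) := by
      have hdd : diagonal (fun j => β j ^ 2) = diagonal β * (D * Dᵀ) * diagonal β := by
        rw [hD, Matrix.mul_one, diagonal_mul_diagonal]; simp [sq]
      rw [hdd, hB]
      simp only [transpose_mul, transpose_transpose, diagonal_transpose, Matrix.mul_assoc]
    rw [this, trace_mul_comm, Matrix.mul_assoc, trace]
    refine Finset.sum_congr rfl fun j _ => ?_
    rw [diag_apply, diagonal_mul, mul_apply]
    simp [sq]
  rw [transpose_sub, Matrix.sub_mul, Matrix.mul_sub, Matrix.mul_sub, trace_sub, trace_sub,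
    trace_sub, e3, e4] at hsq
  refine le_trans ?_ (sum_weight_le hmono hpos (t := fun j => ∑ a, (T * U) j a ^ 2)
    (fun j => by positivity) ?_ ?_)
  · rw [e1, e2]; linarith
  · -- Bessel for the columns of `U`, tested on the unit vector `T j`
    intro j
    have h := bessel_of_mul_transpose_eq_one (T := Uᵀ) (by simpa using hU) (T j)
    have h1 : T j ⬝ᵥ T j = 1 := by
      have := congrFun (congrFun hT j) j
      simpa [mul_apply, dotProduct] using this
    rw [h1] at h
    refine le_trans (le_of_eq ?_) h
    simp [dotProduct, mulVec, mul_apply, sq, mul_comm]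
  · -- Bessel for the rows of `T`, tested on each of the `rank M` unit columns of `U`
    rw [Finset.sum_comm]
    calc ∑ a, ∑ j, (T * U) j a ^ 2 ≤ ∑ a : Fin q, (1 : ℝ) := by
          refine Finset.sum_le_sum fun a _ => ?_
          have h := bessel_of_mul_transpose_eq_one hT (Uᵀ a)
          have h1 : Uᵀ a ⬝ᵥ Uᵀ a = 1 := by
            have := congrFun (congrFun hU a) a
            simpa [mul_apply, dotProduct] using this
          rw [h1] at h
          refine le_trans (le_of_eq ?_) h
          simp [dotProduct, mulVec, mul_apply, sq]
      _ ≤ r := by simpa [hq] using hM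

/-- Both `S * Q` and `Q * S` are the orthogonal projection onto the range of the symmetric
matrix `S`. -/
lemma IsMP.comm_of_symm {n : ℕ} {S Q : Matrix (Fin n) (Fin n) ℝ} (h : IsMP S Q)
    (hS : Sᵀ = S) : S * Q = Q * S := by
  obtain ⟨h1, -, h3, h4⟩ := h
  rw [transpose_mul, hS] at h3 h4
  calc S * Q = Qᵀ * (S * Q * S) := by rw [h1, h3]
    _ = S * Q * (Q * S) := by
        rw [← Matrix.mul_assoc, ← Matrix.mul_assoc, h3, Matrix.mul_assoc]
    _ = S * Q * S * Qᵀ := by rw [← h4]; simp only [Matrix.mul_assoc]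
    _ = Q * S := by rw [h1, h4]

/-! ### Covariances -/

section Covariance

variable {Ω : Type*} [MeasurableSpace Ω] {μ : Measure Ω}

lemma MemL2.memLp {n : ℕ} {g : Ω → Fin n → ℝ} (hg : MemL2 μ g) (i : Fin n) :
    MemLp (fun ω => g ω i) 2 μ := by
  have hm : Measurable fun ω => g ω i := (measurable_pi_apply i).comp hg.1
  rw [memLp_two_iff_integrable_sq hm.aestronglyMeasurable]
  refine hg.2.mono' (hm.pow_const 2).aestronglyMeasurable (.of_forall fun ω => ?_)
  rw [Real.norm_of_nonneg (sq_nonneg _)]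
  exact Finset.single_le_sum (f := fun i => g ω i ^ 2) (fun _ _ => sq_nonneg _)
    (Finset.mem_univ i)

lemma MemL2.memLp_mulVec {m n : ℕ} {g : Ω → Fin n → ℝ} (hg : MemL2 μ g)
    (M : Matrix (Fin m) (Fin n) ℝ) (i : Fin m) : MemLp (fun ω => (M *ᵥ g ω) i) 2 μ := by
  simp only [mulVec, dotProduct]
  exact memLp_finsetSum _ fun j _ => (hg.memLp j).const_mul (M i j)

variable [IsProbabilityMeasure μ]

lemma cov_apply {m n : ℕ} {g : Ω → Fin m → ℝ} {h : Ω → Fin n → ℝ} (hg : MemL2 μ g)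
    (hh : MemL2 μ h) (i : Fin m) (j : Fin n) :
    cov μ g h i j = ProbabilityTheory.covariance (fun ω => g ω i) (fun ω => h ω j) μ := by
  rw [ProbabilityTheory.covariance_eq_sub (hg.memLp i) (hh.memLp j)]
  rfl

lemma covariance_mulVec_right {m n l : ℕ} {g : Ω → Fin m → ℝ} {h : Ω → Fin n → ℝ}
    (hg : MemL2 μ g) (hh : MemL2 μ h) (N : Matrix (Fin l) (Fin n) ℝ) (i : Fin m) (j : Fin l) :
    ProbabilityTheory.covariance (fun ω => g ω i) (fun ω => (N *ᵥ h ω) j) μ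
      = (cov μ g h * Nᵀ) i j := by
  simp only [mulVec, dotProduct]
  rw [ProbabilityTheory.covariance_fun_sum_right
    (fun b => (hh.memLp b).const_mul (N j b)) (hg.memLp i), mul_apply]
  refine Finset.sum_congr rfl fun b _ => ?_
  rw [ProbabilityTheory.covariance_const_mul_right, cov_apply hg hh, transpose_apply, mul_comm]

lemma covariance_mulVec_mulVec {m n l q : ℕ} {g : Ω → Fin m → ℝ} {h : Ω → Fin n → ℝ}
    (hg : MemL2 μ g) (hh : MemL2 μ h) (M : Matrix (Fin q) (Fin m) ℝ)
    (N : Matrix (Fin l) (Fin n) ℝ) (i : Fin q) (j : Fin l) :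
    ProbabilityTheory.covariance (fun ω => (M *ᵥ g ω) i) (fun ω => (N *ᵥ h ω) j) μ
      = (M * cov μ g h * Nᵀ) i j := by
  have : ∀ ω, (M *ᵥ g ω) i = ∑ a, M i a * g ω a := fun ω => rfl
  simp only [this]
  rw [ProbabilityTheory.covariance_fun_sum_left
    (fun b => (hg.memLp b).const_mul (M i b)) (hh.memLp_mulVec N j), Matrix.mul_assoc, mul_apply]
  refine Finset.sum_congr rfl fun b _ => ?_
  rw [ProbabilityTheory.covariance_const_mul_left, covariance_mulVec_right hg hh]

/-- The kernel of `cov h h` is contained in the kernel of `cov g h`: a linear combination of the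
coordinates of `h` with zero variance is almost surely constant. -/
lemma cov_mul_eq_zero {m n l : ℕ} {g : Ω → Fin m → ℝ} {h : Ω → Fin n → ℝ}
    (hg : MemL2 μ g) (hh : MemL2 μ h) (R : Matrix (Fin n) (Fin l) ℝ)
    (hR : cov μ h h * R = 0) : cov μ g h * R = 0 := by
  ext i j
  have hmem := hh.memLp_mulVec Rᵀ j
  have hvar : ProbabilityTheory.variance (fun ω => (Rᵀ *ᵥ h ω) j) μ = 0 := by
    rw [← ProbabilityTheory.covariance_self hmem.aestronglyMeasurable.aemeasurable,
      covariance_mulVec_mulVec hh hh, transpose_transpose, Matrix.mul_assoc, hR]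
    simp
  have hae := ProbabilityTheory.ae_eq_integral_of_variance_eq_zero hmem hvar
  have hcov := covariance_mulVec_right hg hh Rᵀ i j
  rw [transpose_transpose] at hcov
  rw [← hcov, Matrix.zero_apply, ProbabilityTheory.covariance]
  refine integral_eq_zero_of_ae ?_
  filter_upwards [hae] with ω hω
  simp [hω]

/-- Squared bias plus variance decomposition of the error; uncorrelatedness removes the mixed
terms. -/
lemma errJ_eq {m n p : ℕ} {x : Ω → Fin m → ℝ} (hx : MemL2 μ x)
    {v : Fin p → Ω → Fin n → ℝ} (hv : ∀ k, MemL2 μ (v k))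
    (horth : ∀ i j, i ≠ j → cov μ (v i) (v j) = 0) (f : Fin m → ℝ)
    (F : Fin p → Matrix (Fin m) (Fin n) ℝ) :
    errJ μ x v f F = ∑ i, (vmean μ x - f - ∑ k, F k *ᵥ vmean μ (v k)) i ^ 2
      + (trace (cov μ x x) - ∑ k, (2 * trace (cov μ x (v k) * (F k)ᵀ)
        - trace (F k * cov μ (v k) (v k) * (F k)ᵀ))) := by
  have hY : ∀ i, MemLp (fun ω => ∑ k, (F k *ᵥ v k ω) i) 2 μ := fun i =>
    memLp_finsetSum _ fun k _ => (hv k).memLp_mulVec (F k) i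
  have hZ : ∀ i, MemLp (fun ω => x ω i - f i - ∑ k, (F k *ᵥ v k ω) i) 2 μ := fun i =>
    ((hx.memLp i).sub (memLp_const (f i))).sub (hY i)
  have hmean : ∀ i, ∫ ω, (x ω i - f i - ∑ k, (F k *ᵥ v k ω) i) ∂μ
      = (vmean μ x - f - ∑ k, F k *ᵥ vmean μ (v k)) i := by
    intro i
    have hxi := (hx.memLp i).integrable one_le_two
    have hxf : Integrable (fun ω => x ω i - f i) μ := hxi.sub (integrable_const _)
    rw [integral_sub hxf ((hY i).integrable one_le_two),
      integral_sub hxi (integrable_const _), integral_finsetSum _ fun k _ =>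
        ((hv k).memLp_mulVec (F k) i).integrable one_le_two]
    simp only [Pi.sub_apply, Finset.sum_apply, integral_const, probReal_univ, one_smul]
    congr 1
    refine Finset.sum_congr rfl fun k _ => ?_
    simp only [mulVec, dotProduct]
    rw [integral_finsetSum _ fun j _ =>
      (((hv k).memLp j).const_mul (F k i j)).integrable one_le_two]
    simp [integral_const_mul, vmean]
  have hvar : ∀ i, ProbabilityTheory.variance
      (fun ω => x ω i - f i - ∑ k, (F k *ᵥ v k ω) i) μ
      = cov μ x x i i - ∑ k, (2 * (cov μ x (v k) * (F k)ᵀ) i i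
        - (F k * cov μ (v k) (v k) * (F k)ᵀ) i i) := by
    intro i
    have e : (fun ω => x ω i - f i - ∑ k, (F k *ᵥ v k ω) i)
        = fun ω => (x ω i - ∑ k, (F k *ᵥ v k ω) i) - f i := by
      ext ω; ring
    have hxY : MemLp (fun ω => x ω i - ∑ k, (F k *ᵥ v k ω) i) 2 μ := (hx.memLp i).sub (hY i)
    rw [e, ProbabilityTheory.variance_sub_const hxY.aestronglyMeasurable,
      ProbabilityTheory.variance_fun_sub (hx.memLp i) (hY i),
      ProbabilityTheory.variance_fun_sum fun k => (hv k).memLp_mulVec (F k) i,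
      ProbabilityTheory.covariance_fun_sum_right (fun k => (hv k).memLp_mulVec (F k) i)
        (hx.memLp i),
      ← ProbabilityTheory.covariance_self (hx.memLp i).aestronglyMeasurable.aemeasurable,
      ← cov_apply hx hx, Finset.sum_sub_distrib, ← Finset.mul_sum]
    have h1 : ∀ k l, ProbabilityTheory.covariance (fun ω => (F k *ᵥ v k ω) i)
        (fun ω => (F l *ᵥ v l ω) i) μ
        = if k = l then (F k * cov μ (v k) (v k) * (F k)ᵀ) i i else 0 := by
      intro k l
      rw [covariance_mulVec_mulVec (hv k) (hv l)]
      split_ifs with h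
      · rw [h]
      · simp [horth k l h]
    simp only [h1, covariance_mulVec_right hx (hv _), Finset.sum_ite_eq, Finset.mem_univ, if_true]
    ring
  have hsq : ∀ i, ∫ ω, (x ω i - f i - ∑ k, (F k *ᵥ v k ω) i) ^ 2 ∂μ
      = (vmean μ x - f - ∑ k, F k *ᵥ vmean μ (v k)) i ^ 2
        + (cov μ x x i i - ∑ k, (2 * (cov μ x (v k) * (F k)ᵀ) i i
        - (F k * cov μ (v k) (v k) * (F k)ᵀ) i i)) := by
    intro i
    rw [← hvar, ← hmean, ProbabilityTheory.variance_eq_sub (hZ i)]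
    simp
  unfold errJ
  rw [integral_finsetSum _ fun i _ => (hZ i).integrable_sq]
  simp only [hsq, Finset.sum_add_distrib, Finset.sum_sub_distrib]
  simp only [trace, diag_apply, Finset.mul_sum]
  rw [Finset.sum_comm (f := fun i k => 2 * (cov μ x (v k) * (F k)ᵀ) i i),
    Finset.sum_comm (f := fun i k => (F k * cov μ (v k) (v k) * (F k)ᵀ) i i)]

end Covariance

/-- A sum of rank-one terms as a product `Tᵀ diag(β) D`, with the vectors `s j` and `d j` as the
rows of `T` and `D`. -/
lemma sum_smul_vecMulVec_eq {m n : ℕ} (s : Fin n → Fin m → ℝ) (d : Fin n → Fin n → ℝ)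
    (β : Fin n → ℝ) : ∑ j, β j • vecMulVec (s j) (d j)
      = (Matrix.of s)ᵀ * diagonal β * Matrix.of d := by
  ext a b
  rw [mul_apply, Matrix.sum_apply]
  simp only [mul_diagonal, Matrix.smul_apply, vecMulVec_apply, transpose_apply, of_apply, smul_eq_mul]
  exact Finset.sum_congr rfl fun j _ => by ring

theorem optimal_rank_constrained_orthogonal
    {Ω : Type*} [MeasurableSpace Ω] (μ : Measure Ω) [IsProbabilityMeasure μ]
    {m n p : ℕ} (x : Ω → Fin m → ℝ) (hx : MemL2 μ x)
    (v : Fin p → Ω → Fin n → ℝ) (hv : ∀ k, MemL2 μ (v k))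
    (horth : ∀ i j, i ≠ j → cov μ (v i) (v j) = 0)
    (S : Fin p → Matrix (Fin n) (Fin n) ℝ)
    (hSpsd : ∀ k, (S k).PosSemidef)
    (hSsq : ∀ k, S k * S k = cov μ (v k) (v k))
    (Q : Fin p → Matrix (Fin n) (Fin n) ℝ)
    (hQ : ∀ k, IsMP (S k) (Q k))
    (η : Fin p → ℕ)
    (s : Fin p → Fin n → Fin m → ℝ) (d : Fin p → Fin n → Fin n → ℝ)
    (β : Fin p → Fin n → ℝ)
    (hs : ∀ k j j', ∑ a, s k j a * s k j' a = if j = j' then (1 : ℝ) else 0)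
    (hd : ∀ k j j', ∑ a, d k j a * d k j' a = if j = j' then (1 : ℝ) else 0)
    (hmono : ∀ k, Antitone (β k)) (hpos : ∀ k j, 0 ≤ β k j)
    (hsvd : ∀ k, cov μ x (v k) * Q k = ∑ j, β k j • Matrix.vecMulVec (s k j) (d k j))
    (G : Fin p → Matrix (Fin m) (Fin n) ℝ)
    (hG : ∀ k, G k = ∑ j ∈ Finset.univ.filter (fun j : Fin n => (j : ℕ) < η k),
        β k j • Matrix.vecMulVec (s k j) (d k j))
    (F0 : Fin p → Matrix (Fin m) (Fin n) ℝ)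
    (hF0 : ∀ k, F0 k = G k * Q k)
    (f0 : Fin m → ℝ)
    (hf0 : f0 = vmean μ x - ∑ k, (F0 k).mulVec (vmean μ (v k))) :
    (∀ (f : Fin m → ℝ) (F : Fin p → Matrix (Fin m) (Fin n) ℝ),
      (∀ k, (F k).rank ≤ η k) →
      errJ μ x v f F ≥ Matrix.trace (cov μ x x)
        - ∑ k, ∑ j ∈ Finset.univ.filter (fun j : Fin n => (j : ℕ) < η k), (β k j) ^ 2) ∧
    errJ μ x v f0 F0 = Matrix.trace (cov μ x x)
        - ∑ k, ∑ j ∈ Finset.univ.filter (fun j : Fin n => (j : ℕ) < η k), (β k j) ^ 2 := by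
  have hST : ∀ k, (S k)ᵀ = S k := fun k => by simpa using (hSpsd k).isHermitian.eq
  set T : Fin p → Matrix (Fin n) (Fin m) ℝ := fun k => Matrix.of (s k) with hTdef
  set D : Fin p → Matrix (Fin n) (Fin n) ℝ := fun k => Matrix.of (d k) with hDdef
  have hT : ∀ k, T k * (T k)ᵀ = 1 := fun k => by
    ext j j'; simpa [mul_apply, one_apply, T] using hs k j j'
  have hD : ∀ k, D k * (D k)ᵀ = 1 := fun k => by
    ext j j'; simpa [mul_apply, one_apply, D] using hd k j j'
  obtain ⟨B, hBdef⟩ : ∃ B : Fin p → Matrix (Fin m) (Fin n) ℝ,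
      ∀ k, B k = cov μ x (v k) * Q k := ⟨_, fun _ => rfl⟩
  have hB : ∀ k, B k = (T k)ᵀ * diagonal (β k) * D k := fun k => by
    rw [hBdef, hsvd, sum_smul_vecMulVec_eq]
  have hcomm : ∀ k, S k * Q k = Q k * S k := fun k => (hQ k).comm_of_symm (hST k)
  have hBS : ∀ k, cov μ x (v k) = B k * S k := by
    intro k
    have hz : cov μ x (v k) * (1 - Q k * S k) = 0 := by
      refine cov_mul_eq_zero hx (hv k) _ ?_
      rw [← hSsq, Matrix.mul_sub, Matrix.mul_one, Matrix.mul_assoc (S k),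
        ← Matrix.mul_assoc (S k) (Q k), (hQ k).1, sub_self]
    rw [Matrix.mul_sub, Matrix.mul_one, sub_eq_zero] at hz
    rw [hBdef, Matrix.mul_assoc]
    exact hz
  -- the error in terms of `M k = F k * S k`
  have herr : ∀ f F, errJ μ x v f F
      = ∑ i, (vmean μ x - f - ∑ k, F k *ᵥ vmean μ (v k)) i ^ 2
        + (trace (cov μ x x) - ∑ k, (2 * trace (F k * S k * (B k)ᵀ)
          - trace (F k * S k * (F k * S k)ᵀ))) := by
    intro f F
    rw [errJ_eq hx hv horth]
    congr 2
    refine Finset.sum_congr rfl fun k _ => ?_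
    congr 2
    · rw [← trace_transpose, transpose_mul, transpose_transpose]
      nth_rw 1 [hBS k]
      rw [transpose_mul, hST, Matrix.mul_assoc]
    · rw [← hSsq, transpose_mul, hST]; simp only [Matrix.mul_assoc]
  constructor
  · intro f F hF
    rw [herr]
    have h1 : ∀ k, 2 * trace (F k * S k * (B k)ᵀ) - trace (F k * S k * (F k * S k)ᵀ)
        ≤ ∑ j ∈ Finset.univ.filter (fun j : Fin n => (j : ℕ) < η k), (β k j) ^ 2 := fun k =>
      eckart_young (hT k) (hD k) (hmono k) (hpos k) (hB k) _
        ((rank_mul_le_left _ _).trans (hF k))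
    have h2 := Finset.sum_le_sum fun k (_ : k ∈ Finset.univ) => h1 k
    have h3 : 0 ≤ ∑ i, (vmean μ x - f - ∑ k, F k *ᵥ vmean μ (v k)) i ^ 2 :=
      Finset.sum_nonneg fun i _ => sq_nonneg _
    linarith
  · have hbias : vmean μ x - f0 - ∑ k, F0 k *ᵥ vmean μ (v k) = 0 := by rw [hf0]; abel
    rw [herr, hbias]
    simp only [Pi.zero_apply, ne_eq, OfNat.ofNat_ne_zero, not_false_eq_true, zero_pow,
      Finset.sum_const_zero, zero_add]
    congr 1
    refine Finset.sum_congr rfl fun k _ => ?_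
    set ι : Fin n → ℝ := fun j => if (j : ℕ) < η k then 1 else 0 with hι
    have hG' : G k = (T k)ᵀ * (diagonal ι * (diagonal (β k) * D k)) := by
      have : G k = ∑ j, (ι j * β k j) • vecMulVec (s k j) (d k j) := by
        rw [hG, Finset.sum_filter]
        exact Finset.sum_congr rfl fun j _ => by by_cases h : (j : ℕ) < η k <;> simp [ι, h]
      rw [this, sum_smul_vecMulVec_eq, ← diagonal_mul_diagonal]
      simp only [Matrix.mul_assoc, T, D]
    -- the right singular vectors with nonzero singular value lie in the range of `Q k * S k`
    have hBQS : B k * (Q k * S k) = B k := by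
      rw [← hcomm, hBdef, Matrix.mul_assoc, ← Matrix.mul_assoc (Q k), (hQ k).2.1]
    have hDQS : diagonal (β k) * D k * (Q k * S k) = diagonal (β k) * D k := by
      have h := congrArg (T k * ·) hBQS
      have hTB : T k * B k = diagonal (β k) * D k := by
        rw [hB k, Matrix.mul_assoc, ← Matrix.mul_assoc (T k), hT, Matrix.one_mul]
      simpa only [← Matrix.mul_assoc (T k), hTB] using h
    have hM : F0 k * S k = G k := by
      rw [hF0, Matrix.mul_assoc, hG']
      simp only [Matrix.mul_assoc] at hDQS ⊢
      rw [hDQS]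
    have hDD : diagonal (β k) * D k * (diagonal (β k) * D k)ᵀ
        = diagonal fun j => β k j ^ 2 := by
      rw [transpose_mul, Matrix.mul_assoc, ← Matrix.mul_assoc (D k), hD, Matrix.one_mul,
        diagonal_transpose, diagonal_mul_diagonal]
      simp [sq]
    have t1 : trace (G k * (B k)ᵀ) = ∑ j, ι j * β k j ^ 2 := by
      have : (B k)ᵀ = (diagonal (β k) * D k)ᵀ * T k := by
        rw [hB k, Matrix.mul_assoc, transpose_mul, transpose_transpose]
      rw [hG', this, Matrix.mul_assoc, trace_mul_comm]
      have : diagonal ι * (diagonal (β k) * D k) * ((diagonal (β k) * D k)ᵀ * T k) * (T k)ᵀ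
          = diagonal ι * (diagonal (β k) * D k * (diagonal (β k) * D k)ᵀ) * (T k * (T k)ᵀ) := by
        simp only [Matrix.mul_assoc]
      rw [this, hDD, hT, Matrix.mul_one, diagonal_mul_diagonal, trace_diagonal]
    have t2 : trace (G k * (G k)ᵀ) = ∑ j, ι j * β k j ^ 2 := by
      have : (G k)ᵀ = (diagonal (β k) * D k)ᵀ * (diagonal ι * T k) := by
        rw [hG', transpose_mul, transpose_mul, transpose_transpose, diagonal_transpose,
          Matrix.mul_assoc]
      rw [this, hG', Matrix.mul_assoc, trace_mul_comm]
      have : diagonal ι * (diagonal (β k) * D k) *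
            ((diagonal (β k) * D k)ᵀ * (diagonal ι * T k)) * (T k)ᵀ
          = diagonal ι * (diagonal (β k) * D k * (diagonal (β k) * D k)ᵀ) * diagonal ι
            * (T k * (T k)ᵀ) := by
        simp only [Matrix.mul_assoc]
      rw [this, hDD, hT, Matrix.mul_one, diagonal_mul_diagonal, diagonal_mul_diagonal,
        trace_diagonal]
      exact Finset.sum_congr rfl fun j _ => by by_cases h : (j : ℕ) < η k <;> simp [ι, h]
    rw [hM, t1, t2, Finset.sum_filter, two_mul, add_sub_cancel_right]
    exact Finset.sum_congr rfl fun j _ => by by_cases h : (j : ℕ) < η k <;> simp [ι, h]
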